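/- Let K be a field and D a commutative integral domain that is a K-algebra, let t ∈ D be nonzero, and let f, g ∈ K[X] be monic polynomials of degree greater than 1 such that the quotient K-algebras K[X]/(f) and K[X]/(g) are isomorphic as K-algebras. Let F = FreeAlgebra D (Fin 3) with generators x = ι 0, u = ι 1, y = ι 2, and for a polynomial h ∈ K[X] let h(x) ∈ F denote the evaluation of h at x (via the structure map K → D → F). Let I_f be the two-sided ideal of F generated by {x·u − u·x, t•u − f(x)}, and define I_g analogously with g in place of f. Then the quotient D-algebras F/I_f and F/I_g are isomorphic as D-algebras. (F/I_f is a presentation of the coproduct A *_D K⟨y⟩, where A = D[x, t⁻¹f(x)], so this is the cancellation-type isomorphism A *_D K⟨y⟩ ≅_D B *_D K⟨y⟩ with B = D[x, t⁻¹g(x)].) -/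

import Mathlib

open FreeAlgebra

/-- The defining relations of the `D`-algebra `D[x, t⁻¹f(x)] *_D K⟨y⟩`, presented as a quotient
of the free algebra `F = FreeAlgebra D (Fin 3)` on generators `x = ι 0`, `u = ι 1`, `y = ι 2`
by the two-sided ideal generated by `x·u − u·x` and `t•u − f(x)`. -/
def cancellationRel (K : Type) [Field K] (D : Type) [CommRing D] [Algebra K D]
    (t : D) (f : Polynomial K) : FreeAlgebra D (Fin 3) → FreeAlgebra D (Fin 3) → Prop :=
  fun a b =>
    (a = ι D 0 * ι D 1 - ι D 1 * ι D 0 ∧ b = 0) ∨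
    (a = t • ι D 1 - Polynomial.aeval (ι D (0 : Fin 3)) f ∧ b = 0)

/-!
Write `R_f` for the algebra presented by `x u = u x` and `t u = f(x)`, with `y` free. An isomorphism
`D[X]/(f) ≃ D[X]/(g)` and its inverse are given by substituting polynomials `q` and `p`, so that
`f ∣ g(p)` and `f ∣ q(p) - X`. Since polynomials take congruent values modulo `t` at points
congruent modulo `t`, and `f(x) = t u`, both `g(t y + p(x))` and `x - q(t y + p(x))` are divisible
by `t` in `R_f`. This gives a map `R_g → R_f` sending `x` to `t y + p(x)` and `y` to
`t⁻¹(x - q(t y + p(x)))`, and exchanging the two algebras gives its inverse.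

The verifications involve cancelling `t`, so `R_f` must have no `t`-torsion. In fact `R_f` is a
projective `D`-module when `f` is monic of positive degree: it is the coproduct of `D[y]` and the
commutative algebra `A = D[x, u] / (t u - f(x))`, which is free with some `D`-basis `b`, so `R_f` is
a retract of the free `A`-module on the words in the elements `y b_i`.
-/

open Polynomial

open scoped nonZeroDivisors

section Polynomials

lemma exists_aeval_smul_add_eq {D R : Type*} [CommSemiring D] [Semiring R] [Algebra D R]
    (t : D) (y b : R) (h : D[X]) : ∃ r : R, aeval (t • y + b) h = aeval b h + t • r := by
  induction h using Polynomial.induction_on with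
  | C a => exact ⟨0, by simp⟩
  | add p q hp hq =>
    obtain ⟨r, hr⟩ := hp
    obtain ⟨s, hs⟩ := hq
    exact ⟨r + s, by rw [map_add, map_add, hr, hs, smul_add]; abel⟩
  | monomial n a ih =>
    obtain ⟨r, hr⟩ := ih
    refine ⟨aeval b (C a * X ^ n) * y + r * (t • y + b), ?_⟩
    rw [pow_succ, ← mul_assoc, map_mul, hr, map_mul _ _ X, aeval_X, aeval_X]
    simp only [add_mul, mul_add, smul_add, smul_mul_assoc, mul_smul_comm]
    abel

variable {D : Type*} [CommRing D] {f g : D[X]}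

lemma mk_comp_eq_of_root_eq {φ : AdjoinRoot f →ₐ[D] AdjoinRoot g} {q : D[X]}
    (hq : φ (AdjoinRoot.root f) = AdjoinRoot.mk g q) (h : D[X]) :
    AdjoinRoot.mk g (h.comp q) = φ (AdjoinRoot.mk f h) := by
  rw [← AdjoinRoot.aeval_eq, ← AdjoinRoot.aeval_eq, aeval_comp, ← aeval_algHom_apply, hq,
    AdjoinRoot.aeval_eq]

lemma exists_comp_of_adjoinRoot_algEquiv (e : AdjoinRoot f ≃ₐ[D] AdjoinRoot g) :
    ∃ p q : D[X], f ∣ g.comp p ∧ f ∣ q.comp p - X ∧ g ∣ f.comp q ∧ g ∣ p.comp q - X := by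
  obtain ⟨q, hq⟩ := AdjoinRoot.mk_surjective (e (AdjoinRoot.root f))
  obtain ⟨p, hp⟩ := AdjoinRoot.mk_surjective (e.symm (AdjoinRoot.root g))
  have comp_q (h : D[X]) : AdjoinRoot.mk g (h.comp q) = e (AdjoinRoot.mk f h) :=
    mk_comp_eq_of_root_eq (φ := e.toAlgHom) hq.symm h
  have comp_p (h : D[X]) : AdjoinRoot.mk f (h.comp p) = e.symm (AdjoinRoot.mk g h) :=
    mk_comp_eq_of_root_eq (φ := e.symm.toAlgHom) hp.symm h
  refine ⟨p, q, ?_, ?_, ?_, ?_⟩ <;> rw [← AdjoinRoot.mk_eq_zero]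
  · rw [comp_p, AdjoinRoot.mk_self, map_zero]
  · rw [map_sub, comp_p, hq, e.symm_apply_apply, AdjoinRoot.mk_X, sub_self]
  · rw [comp_q, AdjoinRoot.mk_self, map_zero]
  · rw [map_sub, comp_q, hp, e.apply_symm_apply, AdjoinRoot.mk_X, sub_self]

lemma subsingleton_adjoinRoot_iff (hf : f.Monic) : Subsingleton (AdjoinRoot f) ↔ f = 1 :=
  Ideal.Quotient.subsingleton_iff.trans (Ideal.span_singleton_eq_top.trans hf.isUnit_iff)

open scoped TensorProduct in
/-- Adjoining a root of a polynomial commutes with extension of scalars. -/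
noncomputable def adjoinRootBaseChange {K : Type*} [CommRing K] [Algebra K D] (f : K[X]) :
    D ⊗[K] AdjoinRoot f ≃ₐ[D] AdjoinRoot (f.map (algebraMap K D)) :=
  (AdjoinRoot.tensorAlgEquiv f _ rfl).trans <|
    AdjoinRoot.mapAlgEquiv (Algebra.TensorProduct.rid K D D) _ _ <| by
      rw [Polynomial.map_map]
      refine Associated.of_eq (congrArg (f.map ·) ?_)
      ext
      simp [Algebra.algebraMap_eq_smul_one]

end Polynomials

section Words

variable {D A R ι : Type*} [CommSemiring D] [CommSemiring A] [Algebra D A]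
  [Semiring R] [Algebra D R]
  (b : Module.Basis ι D A) (π : A →ₐ[D] R) (y : R)

/-- Left multiplication by `y` on the coproduct of `A` and `D[y]`, regarded as the free left
`A`-module on the words `y b_{i₁} ⋯ y b_{iₙ}` in the elements of a `D`-basis `b` of `A`. -/
noncomputable def prependWord : Module.End D (List ι →₀ A) :=
  Finsupp.lsum D fun w => b.constr D fun i => Finsupp.single (i :: w) 1

/-- The value in `R` of a combination of words `y b_{i₁} ⋯ y b_{iₙ}` with coefficients in `A`,
where `A` acts through `π`. -/
noncomputable def wordEval : (List ι →₀ A) →ₗ[D] R :=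
  Finsupp.lsum D fun w =>
    LinearMap.mulRight D (w.map fun i => y * π (b i)).prod ∘ₗ π.toLinearMap

lemma wordEval_single (w : List ι) (a : A) :
    wordEval b π y (Finsupp.single w a) = π a * (w.map fun i => y * π (b i)).prod := by
  simp [wordEval]

lemma wordEval_smul (a : A) (m : List ι →₀ A) :
    wordEval b π y (a • m) = π a * wordEval b π y m := by
  induction m using Finsupp.induction_linear with
  | zero => simp
  | add m n hm hn => rw [smul_add, map_add, map_add, hm, hn, mul_add]
  | single w c =>
    rw [Finsupp.smul_single, wordEval_single, wordEval_single, smul_eq_mul, map_mul, mul_assoc]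

lemma wordEval_prependWord (m : List ι →₀ A) :
    wordEval b π y (prependWord b m) = y * wordEval b π y m := by
  suffices h : wordEval b π y ∘ₗ prependWord b = LinearMap.mulLeft D y ∘ₗ wordEval b π y from
    LinearMap.congr_fun h m
  refine Finsupp.lhom_ext' fun w => b.ext fun i => ?_
  simp [prependWord, wordEval_single, mul_assoc]

variable {b π y}

lemma wordEval_apply_of_adjoin_eq_top (hgen : Algebra.adjoin D (insert y (Set.range π)) = ⊤)
    {ρ : R →ₐ[D] Module.End D (List ι →₀ A)} (hρy : ρ y = prependWord b)
    (hρπ : ∀ a, ρ (π a) = Algebra.lsmul D D _ a) (r : R) (m : List ι →₀ A) :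
    wordEval b π y (ρ r m) = r * wordEval b π y m := by
  have hr : r ∈ Algebra.adjoin D (insert y (Set.range π)) := hgen ▸ Algebra.mem_top
  induction hr using Algebra.adjoin_induction generalizing m with
  | mem r hr =>
    obtain rfl | ⟨a, rfl⟩ := hr
    · rw [hρy, wordEval_prependWord]
    · rw [hρπ, Algebra.lsmul_coe, wordEval_smul]
  | algebraMap d => rw [AlgHom.commutes, Module.algebraMap_end_apply, map_smul, Algebra.smul_def]
  | add r s _ _ hr hs => rw [map_add, LinearMap.add_apply, map_add, hr, hs, add_mul]
  | mul r s _ _ hr hs => rw [map_mul, Module.End.mul_apply, hr, hs, mul_assoc]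

/-- The algebra is a retract of the module of words, through its action on the empty word. -/
lemma projective_of_adjoin_eq_top (hgen : Algebra.adjoin D (insert y (Set.range π)) = ⊤)
    {ρ : R →ₐ[D] Module.End D (List ι →₀ A)} (hρy : ρ y = prependWord b)
    (hρπ : ∀ a, ρ (π a) = Algebra.lsmul D D _ a) : Module.Projective D R := by
  have : Module.Free D A := .of_basis b
  refine .of_split (LinearMap.applyₗ (Finsupp.single [] 1) ∘ₗ ρ.toLinearMap) (wordEval b π y) ?_
  ext r
  simp [wordEval_apply_of_adjoin_eq_top hgen hρy hρπ, wordEval_single]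

end Words

/-- The affine modification `D[x, t⁻¹f(x)]`, presented as `D[u][X] / (f(X) - t u)`. -/
abbrev AffineModification {D : Type*} [CommRing D] (t : D) (f : D[X]) : Type _ :=
  AdjoinRoot (f.map (C : D →+* D[X]) - C (C t * X))

namespace AffineModification

variable {D : Type*} [CommRing D] {t : D} {f : D[X]}

lemma free (hf : f.Monic) (hdf : 0 < f.natDegree) (t : D) :
    Module.Free D (AffineModification t f) := by
  have : Nontrivial D := Polynomial.nontrivial_iff.1 ⟨f, 0, by rintro rfl; simp at hdf⟩
  have hdeg : (C (C t * X) : D[X][X]).degree < (f.map (C : D →+* D[X])).degree := by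
    rw [hf.degree_map]
    exact degree_C_le.trans_lt (natDegree_pos_iff_degree_pos.1 hdf)
  have : Module.Free D[X] (AffineModification t f) :=
    ((hf.map C).sub_of_left hdeg).free_adjoinRoot
  exact .trans (S := D[X])

variable (t f) in
lemma smul_of_X :
    t • (AdjoinRoot.of _ X : AffineModification t f) = aeval (AdjoinRoot.root _) f := by
  have h := AdjoinRoot.eval₂_root (f.map (C : D →+* D[X]) - C (C t * X))
  rw [eval₂_sub, eval₂_map, eval₂_C, sub_eq_zero] at h
  rw [Algebra.smul_def]
  exact (h.trans (map_mul _ _ _)).symm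

open scoped IsMulCommutative in
lemma exists_algHom {R : Type*} [Ring R] [Algebra D R] {x u : R} (hxu : Commute x u)
    (htu : t • u = aeval x f) :
    ∃ π : AffineModification t f →ₐ[D] R, π (AdjoinRoot.root _) = x ∧
      π (AdjoinRoot.of _ X) = u := by
  let S := Algebra.adjoin D {x, u}
  have : IsMulCommutative S := Algebra.isMulCommutative_adjoin D <| by
    rintro a (rfl | rfl) b (rfl | rfl)
    exacts [rfl, hxu, hxu.symm, rfl]
  let x' : S := ⟨x, Algebra.subset_adjoin (by simp)⟩
  let u' : S := ⟨u, Algebra.subset_adjoin (by simp)⟩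
  have htu' : t • u' = aeval x' f := by
    apply Subtype.ext
    exact htu.trans (aeval_algHom_apply S.val x' f)
  let π : AffineModification t f →ₐ[D] S := AdjoinRoot.liftAlgHom _ (aeval u') x' <| by
    have hC : ((aeval u' : D[X] →ₐ[D] S) : D[X] →+* S).comp C = algebraMap D S :=
      (aeval u').comp_algebraMap
    rw [eval₂_sub, eval₂_map, hC, ← aeval_def, ← htu', eval₂_C]
    simp [Algebra.smul_def]
  exact ⟨S.val.comp π, by simp [π, x'], by simp [π, u']⟩

end AffineModification

/-- The defining relations `x u = u x` and `t u = f(x)` of the coproduct of `D[x, t⁻¹f(x)]` and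
`D[y]`, on the generators `x = ι 0`, `u = ι 1`, `y = ι 2`. Both are written as vanishing of a
difference, so that they match `cancellationRel`. -/
inductive ModificationRel {D : Type*} [CommRing D] (t : D) (f : D[X]) :
    FreeAlgebra D (Fin 3) → FreeAlgebra D (Fin 3) → Prop
  | comm : ModificationRel t f (ι D 0 * ι D 1 - ι D 1 * ι D 0) 0
  | smul : ModificationRel t f (t • ι D 1 - aeval (ι D 0) f) 0

/-- The coproduct of the affine modification `D[x, t⁻¹f(x)]` and `D[y]`. -/
abbrev ModificationCoproduct {D : Type*} [CommRing D] (t : D) (f : D[X]) : Type _ :=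
  RingQuot (ModificationRel t f)

lemma cancellationRel_eq_modificationRel {K D : Type} [Field K] [CommRing D] [Algebra K D]
    (t : D) (f : K[X]) :
    cancellationRel K D t f = ModificationRel t (f.map (algebraMap K D)) := by
  ext a b
  constructor
  · rintro (⟨rfl, rfl⟩ | ⟨rfl, rfl⟩)
    · exact .comm
    · rw [← aeval_map_algebraMap D]
      exact .smul
  · rintro (_ | _)
    · exact .inl ⟨rfl, rfl⟩
    · exact .inr ⟨by rw [aeval_map_algebraMap], rfl⟩

namespace ModificationCoproduct

variable {D : Type*} [CommRing D]

section Generators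

variable (t : D) (f : D[X])

/-- The generator `x` of `D[x, t⁻¹f(x)]`. -/
noncomputable def x : ModificationCoproduct t f := RingQuot.mkAlgHom D _ (ι D 0)

/-- The generator `u = t⁻¹f(x)` of `D[x, t⁻¹f(x)]`. -/
noncomputable def u : ModificationCoproduct t f := RingQuot.mkAlgHom D _ (ι D 1)

/-- The generator `y` of the free factor `D[y]`. -/
noncomputable def y : ModificationCoproduct t f := RingQuot.mkAlgHom D _ (ι D 2)

lemma commute_x_u : Commute (x t f) (u t f) := by
  have h := RingQuot.mkAlgHom_rel D (ModificationRel.comm (t := t) (f := f))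
  rw [map_sub, map_mul, map_mul, map_zero] at h
  exact sub_eq_zero.1 h

lemma smul_u : t • u t f = aeval (x t f) f := by
  have h := RingQuot.mkAlgHom_rel D (ModificationRel.smul (t := t) (f := f))
  rw [map_sub, map_smul, map_zero, ← aeval_algHom_apply] at h
  exact sub_eq_zero.1 h

lemma adjoin_x_u_y : Algebra.adjoin D {x t f, u t f, y t f} = ⊤ := by
  have h := congrArg (Subalgebra.map (RingQuot.mkAlgHom D (ModificationRel t f)))
    (FreeAlgebra.adjoin_range_ι D (Fin 3))
  rw [AlgHom.map_adjoin, Algebra.map_top, (AlgHom.range_eq_top _).2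
    (RingQuot.mkAlgHom_surjective D _)] at h
  rw [← h, ← Set.range_comp]
  congr 1
  ext a
  simp [Fin.exists_fin_succ, x, u, y, eq_comm]

end Generators

variable {t : D} {f g p q : D[X]}

section UniversalProperty

variable {R : Type*} [Ring R] [Algebra D R]

lemma exists_algHom {x' u' : R} (hxu : Commute x' u') (htu : t • u' = aeval x' f) (y' : R) :
    ∃ φ : ModificationCoproduct t f →ₐ[D] R, φ (x t f) = x' ∧ φ (u t f) = u' ∧ φ (y t f) = y' := by
  let F : FreeAlgebra D (Fin 3) →ₐ[D] R := FreeAlgebra.lift D ![x', u', y']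
  have hF ⦃a b⦄ (h : ModificationRel t f a b) : F a = F b := by
    obtain _ | _ := h
    · simp [F, hxu.eq]
    · simp [F, ← aeval_algHom_apply, htu]
  refine ⟨RingQuot.liftAlgHom D ⟨F, hF⟩, ?_, ?_, ?_⟩ <;> simp [x, u, y, F]

lemma algHom_ext {φ ψ : ModificationCoproduct t f →ₐ[D] R} (hx : φ (x t f) = ψ (x t f))
    (hu : φ (u t f) = ψ (u t f)) (hy : φ (y t f) = ψ (y t f)) : φ = ψ := by
  refine RingQuot.ringQuot_ext' D _ _ (FreeAlgebra.hom_ext (funext fun i => ?_))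
  fin_cases i
  exacts [hx, hu, hy]

end UniversalProperty

theorem projective (hf : f.Monic) (hdf : 0 < f.natDegree) :
    Module.Projective D (ModificationCoproduct t f) := by
  have := AffineModification.free hf hdf t
  let b := Module.Free.chooseBasis D (AffineModification t f)
  let L := Algebra.lsmul D (A := AffineModification t f) D
    (List (Module.Free.ChooseBasisIndex D (AffineModification t f)) →₀ AffineModification t f)
  obtain ⟨π, hπx, hπu⟩ := AffineModification.exists_algHom (commute_x_u t f) (smul_u t f)
  have hgen : Algebra.adjoin D (insert (y t f) (Set.range π)) = ⊤ := by
    rw [eq_top_iff, ← adjoin_x_u_y]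
    refine Algebra.adjoin_mono ?_
    rintro _ (rfl | rfl | rfl)
    exacts [.inr ⟨_, hπx⟩, .inr ⟨_, hπu⟩, .inl rfl]
  obtain ⟨ρ, hρx, hρu, hρy⟩ := exists_algHom (t := t) (f := f) ((Commute.all _ _).map L)
    (by rw [← map_smul, AffineModification.smul_of_X, aeval_algHom_apply]) (prependWord b)
  have hρπ : ρ.comp π = L := by
    refine AdjoinRoot.algHom_ext' (Polynomial.algHom_ext ?_) ?_
    · exact (congrArg ρ hπu).trans hρu
    · exact (congrArg ρ hπx).trans hρx
  exact projective_of_adjoin_eq_top hgen hρy (DFunLike.congr_fun hρπ)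

theorem isSMulRegular (ht : t ∈ D⁰) (hf : f.Monic) (hdf : 0 < f.natDegree) :
    IsSMulRegular (ModificationCoproduct t f) t :=
  have := projective (t := t) hf hdf
  Module.Flat.isSMulRegular_of_nonZeroDivisors (M := ModificationCoproduct t f) ht

/-- The homomorphism `φ` is the substitution `x ↦ t y + p(x)`, `y ↦ t⁻¹(x - q(t y + p(x)))`. The
second condition is multiplied by `t`, and the image of `u` is then determined when `t` is
regular. -/
structure IsTwist (p q : D[X]) (φ : ModificationCoproduct t g →ₐ[D] ModificationCoproduct t f) :
    Prop where
  map_x : φ (x t g) = t • y t f + aeval (x t f) p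
  smul_map_y : t • φ (y t g) = x t f - aeval (φ (x t g)) q

lemma exists_smul_eq_aeval (hgp : f ∣ g.comp p) :
    ∃ r, t • r = aeval (t • y t f + aeval (x t f) p) g := by
  obtain ⟨k, hk⟩ := hgp
  obtain ⟨r, hr⟩ := exists_aeval_smul_add_eq t (y t f) (aeval (x t f) p) g
  refine ⟨u t f * aeval (x t f) k + r, ?_⟩
  rw [hr, ← aeval_comp, hk, map_mul, ← smul_u, smul_add, smul_mul_assoc]

lemma exists_smul_eq_sub_aeval (hqp : f ∣ q.comp p - X) :
    ∃ r, t • r = x t f - aeval (t • y t f + aeval (x t f) p) q := by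
  obtain ⟨k, hk⟩ := hqp
  obtain ⟨r, hr⟩ := exists_aeval_smul_add_eq t (y t f) (aeval (x t f) p) q
  refine ⟨-(u t f * aeval (x t f) k + r), ?_⟩
  rw [hr, ← aeval_comp, sub_eq_iff_eq_add.1 hk, map_add, map_mul, ← smul_u, aeval_X, smul_neg,
    smul_add, smul_mul_assoc]
  abel

lemma exists_isTwist (hreg : IsSMulRegular (ModificationCoproduct t f) t) (hgp : f ∣ g.comp p)
    (hqp : f ∣ q.comp p - X) :
    ∃ φ : ModificationCoproduct t g →ₐ[D] ModificationCoproduct t f, IsTwist p q φ := by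
  obtain ⟨v, hv⟩ := exists_smul_eq_aeval (t := t) hgp
  obtain ⟨z, hz⟩ := exists_smul_eq_sub_aeval (t := t) hqp
  have hcomm : Commute (t • y t f + aeval (x t f) p) v := by
    refine hreg ?_
    have h := (Commute.all X g).map (aeval (t • y t f + aeval (x t f) p))
    rwa [aeval_X, ← hv, Commute, SemiconjBy, mul_smul_comm, smul_mul_assoc] at h
  obtain ⟨φ, hx, -, hy⟩ := exists_algHom hcomm hv z
  exact ⟨φ, hx, by rw [hy, hx, hz]⟩

lemma IsTwist.comp_eq_id (hreg : IsSMulRegular (ModificationCoproduct t f) t)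
    {φ : ModificationCoproduct t g →ₐ[D] ModificationCoproduct t f}
    {ψ : ModificationCoproduct t f →ₐ[D] ModificationCoproduct t g}
    (hφ : IsTwist p q φ) (hψ : IsTwist q p ψ) : φ.comp ψ = AlgHom.id D _ := by
  have hx : φ (ψ (x t f)) = x t f := by
    rw [hψ.map_x, map_add, map_smul, hφ.smul_map_y, ← aeval_algHom_apply, sub_add_cancel]
  have hu : t • φ (ψ (u t f)) = t • u t f := by
    rw [← map_smul, ← map_smul, smul_u, ← aeval_algHom_apply, ← aeval_algHom_apply, hx]
  have hy : t • φ (ψ (y t f)) = t • y t f := by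
    rw [← map_smul, hψ.smul_map_y, map_sub, ← aeval_algHom_apply, hx, hφ.map_x,
      add_sub_cancel_right]
  exact algHom_ext hx (hreg hu) (hreg hy)

end ModificationCoproduct

open ModificationCoproduct in
theorem cancellation_coproduct_isomorphic_general {D : Type*} [CommRing D] {t : D} (ht : t ∈ D⁰)
    {f g : D[X]} (hf : f.Monic) (hg : g.Monic) (e : AdjoinRoot f ≃ₐ[D] AdjoinRoot g) :
    Nonempty (ModificationCoproduct t f ≃ₐ[D] ModificationCoproduct t g) := by
  have hfg : f = 1 ↔ g = 1 := by
    rw [← subsingleton_adjoinRoot_iff hf, ← subsingleton_adjoinRoot_iff hg,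
      e.toEquiv.subsingleton_congr]
  obtain rfl | hf1 := eq_or_ne f 1
  · rw [hfg.1 rfl]
    exact ⟨.refl⟩
  have hregf := isSMulRegular ht hf (hf.natDegree_pos.2 hf1)
  have hregg := isSMulRegular ht hg (hg.natDegree_pos.2 (hfg.not.1 hf1))
  obtain ⟨p, q, hgp, hqp, hfq, hpq⟩ := exists_comp_of_adjoinRoot_algEquiv e
  obtain ⟨φ, hφ⟩ := exists_isTwist hregf hgp hqp
  obtain ⟨ψ, hψ⟩ := exists_isTwist hregg hfq hpq
  exact ⟨.ofAlgHom ψ φ (hψ.comp_eq_id hregg hφ) (hφ.comp_eq_id hregf hψ)⟩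

/-- Asanuma-type cancellation: if `D` is an integral domain over `K`, `t ∈ D` is nonzero, and
`f, g ∈ K[X]` are monic of degree `> 1` with `K[X]/(f) ≅ K[X]/(g)` as `K`-algebras, then the
`D`-algebras `A *_D K⟨y⟩` and `B *_D K⟨y⟩` are isomorphic, where `A = D[x, t⁻¹f(x)]` and
`B = D[x, t⁻¹g(x)]` are presented by the quotients of `FreeAlgebra D (Fin 3)` above. -/
theorem cancellation_coproduct_isomorphic
    {K : Type} [Field K] {D : Type} [CommRing D] [IsDomain D] [Algebra K D]
    (t : D) (ht : t ≠ 0)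
    (f g : Polynomial K) (hf : f.Monic) (hg : g.Monic)
    (hdf : 1 < f.natDegree) (hdg : 1 < g.natDegree)
    (hiso : Nonempty
      ((Polynomial K ⧸ Ideal.span {f}) ≃ₐ[K] (Polynomial K ⧸ Ideal.span {g}))) :
    Nonempty (RingQuot (cancellationRel K D t f) ≃ₐ[D] RingQuot (cancellationRel K D t g)) := by
  obtain ⟨e⟩ := hiso
  rw [cancellationRel_eq_modificationRel, cancellationRel_eq_modificationRel]
  exact cancellation_coproduct_isomorphic_general (mem_nonZeroDivisors_of_ne_zero ht)
    (hf.map _) (hg.map _) <| (adjoinRootBaseChange f).symm.trans <|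
      (Algebra.TensorProduct.congr .refl e).trans (adjoinRootBaseChange g)
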